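/- arXiv:1901.09268 — 4 statements merged into one kernel-verified Lean document; each statement's English description precedes it below -/
import Mathlib

section
/- Let U ⊆ ℂ² be open, F : U → ℂ holomorphic with dF nonvanishing on U (i.e. (∂F/∂x, ∂F/∂y) ≠ (0,0) at every point of U), and let η = (η₁, η₂) be a holomorphic 1-form on U. Then the following are equivalent: (a) dF ∧ η ≡ 0 on U, i.e. (∂F/∂x)·η₂ − (∂F/∂y)·η₁ = 0 identically on U; (b) there exists a holomorphic function g : U → ℂ with η₁ = g·∂F/∂x and η₂ = g·∂F/∂y on U. In particular, for a holomorphic 1-form ω and holomorphic r : U → ℂ, dF ∧ (ω − dr) ≡ 0 holds if and only if there exists holomorphic g with ω = g·dF + dr. -/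
/-!
Where `dF ≠ 0`, `dF ∧ η = 0` forces `η = g · dF` with `g` the quotient `ηᵢ / ∂ᵢF` for any `i` with
`∂ᵢF ≠ 0`, so near each point `g` is a quotient of holomorphic functions, provided the partial
derivatives of `F` are holomorphic.

For the latter, applying the Schwarz lemma twice on complex lines bounds the error of the difference
quotients of `F` in a fixed direction, so that near each point they converge uniformly to the
directional derivative. By the Schwarz lemma once more, uniform convergence of holomorphic functions
passes to their derivatives, so a uniform limit of holomorphic functions is holomorphic.
-/

/-- ∂/∂x of a function on ℂ². -/
noncomputable def pdx (f : ℂ × ℂ → ℂ) (p : ℂ × ℂ) : ℂ := fderiv ℂ f p (1, 0)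

/-- ∂/∂y of a function on ℂ². -/
noncomputable def pdy (f : ℂ × ℂ → ℂ) (p : ℂ × ℂ) : ℂ := fderiv ℂ f p (0, 1)

open Filter Metric Set Topology

section Holomorphic

variable {E G : Type*} [NormedAddCommGroup E] [NormedSpace ℂ E]
  [NormedAddCommGroup G] [NormedSpace ℂ G]

lemma mapsTo_closedBall_of_norm_le {α V : Type*} [SeminormedAddCommGroup V] {f : α → V} {s : Set α}
    {c : α} {M : ℝ} (hc : c ∈ s) (hM : ∀ z ∈ s, ‖f z‖ ≤ M) :
    MapsTo f s (closedBall (f c) (2 * M)) := fun z hz ↦ by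
  rw [mem_closedBall, dist_eq_norm, two_mul]
  exact norm_sub_le_of_le (hM z hz) (hM c hc)

lemma norm_fderiv_le_of_norm_le_ball {f : E → G} {c : E} {R M : ℝ} (hR : 0 < R)
    (hf : DifferentiableOn ℂ f (ball c R)) (hM : ∀ z ∈ ball c R, ‖f z‖ ≤ M) :
    ‖fderiv ℂ f c‖ ≤ 2 * M / R :=
  Complex.norm_fderiv_le_div_of_mapsTo_ball hf
    (mapsTo_closedBall_of_norm_le (mem_ball_self hR) hM) hR

lemma uniformCauchySeqOn_fderiv {ι : Type*} {l : Filter ι} {F : ι → E → G} {s U : Set E} {δ : ℝ}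
    (hδ : 0 < δ) (hsU : ∀ z ∈ s, ball z δ ⊆ U) (hF : ∀ᶠ i in l, DifferentiableOn ℂ (F i) U)
    (hFU : UniformCauchySeqOn F l U) : UniformCauchySeqOn (fun i ↦ fderiv ℂ (F i)) l s := by
  intro u hu
  obtain ⟨ε, hε, hεu⟩ := mem_uniformity_dist.1 hu
  have hclose := hFU _ (dist_mem_uniformity (show 0 < δ * ε / 4 by positivity))
  filter_upwards [hclose, hF.prod_mk hF] with ⟨i, j⟩ hij ⟨hi, hj⟩ z hz
  have hdiff {k : ι} (hk : DifferentiableOn ℂ (F k) U) : DifferentiableOn ℂ (F k) (ball z δ) :=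
    hk.mono (hsU z hz)
  have hdiffAt {k : ι} (hk : DifferentiableOn ℂ (F k) U) : DifferentiableAt ℂ (F k) z :=
    (hdiff hk).differentiableAt (ball_mem_nhds z hδ)
  have hbound : ∀ w ∈ ball z δ, ‖(F i - F j) w‖ ≤ δ * ε / 4 := fun w hw ↦ by
    simpa only [Pi.sub_apply, dist_eq_norm] using (hij w (hsU z hz hw)).le
  refine hεu ?_
  calc dist (fderiv ℂ (F i) z) (fderiv ℂ (F j) z)
      = ‖fderiv ℂ (F i - F j) z‖ := by rw [dist_eq_norm, fderiv_sub (hdiffAt hi) (hdiffAt hj)]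
    _ ≤ 2 * (δ * ε / 4) / δ :=
      norm_fderiv_le_of_norm_le_ball hδ ((hdiff hi).sub (hdiff hj)) hbound
    _ = ε / 2 := by field
    _ < ε := half_lt_self hε

lemma exists_forall_ball_add_smul_mem (𝕜 : Type*) {W : Type*} [NormedField 𝕜]
    [SeminormedAddCommGroup W] [NormedSpace 𝕜 W] {V : Set W} {c : W} (hV : V ∈ 𝓝 c) (v : W) :
    ∃ ε > 0, ∀ p ∈ ball c ε, ∀ t ∈ ball (0 : 𝕜) ε, p + t • v ∈ V := by
  have hcont : ContinuousAt (fun q : W × 𝕜 ↦ q.1 + q.2 • v) (c, 0) := by fun_prop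
  obtain ⟨ε, hε, hεV⟩ := Metric.mem_nhds_iff.1 (hcont.preimage_mem_nhds (by simpa using hV))
  rw [← ball_prod_same] at hεV
  exact ⟨ε, hε, fun p hp t ht ↦ hεV (mk_mem_prod hp ht)⟩

variable [CompleteSpace G]

lemma differentiableOn_of_tendstoUniformlyOn {ι : Type*} {l : Filter ι} [l.NeBot]
    {F : ι → E → G} {f : E → G} {U : Set E} (hU : IsOpen U)
    (hF : ∀ᶠ i in l, DifferentiableOn ℂ (F i) U) (hFf : TendstoUniformlyOn F f l U) :
    DifferentiableOn ℂ f U := by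
  intro c hc
  obtain ⟨R, hR, hRU⟩ := Metric.isOpen_iff.1 hU c hc
  have hsub : ∀ z ∈ ball c (R / 2), ball z (R / 2) ⊆ U := fun z hz ↦
    (ball_subset_ball' (by linarith [mem_ball.1 hz])).trans hRU
  have hcauchy : UniformCauchySeqOn (fun i ↦ fderiv ℂ (F i)) l (ball c (R / 2)) :=
    uniformCauchySeqOn_fderiv (half_pos hR) hsub hF hFf.uniformCauchySeqOn
  have hlim : ∀ z ∈ ball c (R / 2), ∃ A, Tendsto (fun i ↦ fderiv ℂ (F i) z) l (𝓝 A) :=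
    fun z hz ↦ cauchy_map_iff_exists_tendsto.1 (hcauchy.cauchy_map hz)
  choose! f' hf' using hlim
  have hFf' : TendstoUniformlyOn (fun i ↦ fderiv ℂ (F i)) f' l (ball c (R / 2)) :=
    hcauchy.tendstoUniformlyOn_of_tendsto hf'
  have hc' : ball c (R / 2) ∈ 𝓝 c := ball_mem_nhds c (half_pos hR)
  have hderiv : HasFDerivAt f (f' c) c := by
    refine hasFDerivAt_of_tendstoUniformlyOnFilter (f := F)
      (hFf'.tendstoUniformlyOnFilter.mono_right (le_principal_iff.2 hc')) ?_ ?_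
    · filter_upwards [hF.prod_mk (hU.eventually_mem hc)] with ⟨i, z⟩ ⟨hi, hz⟩
      exact (hi.differentiableAt (hU.mem_nhds hz)).hasFDerivAt
    · exact (hU.eventually_mem hc).mono fun z hz ↦ hFf.tendsto_at hz
  exact hderiv.differentiableAt.differentiableWithinAt

lemma norm_dslope_sub_deriv_le {φ : ℂ → G} {c z : ℂ} {R M : ℝ}
    (hφ : DifferentiableOn ℂ φ (ball c R)) (hM : ∀ w ∈ ball c R, ‖φ w‖ ≤ M) (hz : z ∈ ball c R) :
    ‖dslope φ c z - deriv φ c‖ ≤ 4 * M / R ^ 2 * dist z c := by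
  have hR : 0 < R := nonempty_ball.1 ⟨z, hz⟩
  have hc : c ∈ ball c R := mem_ball_self hR
  have hbound : ∀ w ∈ ball c R, ‖dslope φ c w‖ ≤ 2 * M / R := fun w hw ↦
    Complex.norm_dslope_le_div_of_mapsTo_ball hφ (mapsTo_closedBall_of_norm_le hc hM) hw
  have hdiff : DifferentiableOn ℂ (dslope φ c) (ball c R) :=
    (Complex.differentiableOn_dslope (ball_mem_nhds c hR)).2 hφ
  calc ‖dslope φ c z - deriv φ c‖ = dist (dslope φ c z) (dslope φ c c) := by
        rw [dist_eq_norm, dslope_same]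
    _ ≤ 2 * (2 * M / R) / R * dist z c :=
      Complex.dist_le_div_mul_dist_of_mapsTo_ball hdiff (mapsTo_closedBall_of_norm_le hc hbound) hz
    _ = 4 * M / R ^ 2 * dist z c := by field

lemma tendstoUniformlyOn_lineDeriv {f : E → G} {s : Set E} {v : E} {R M : ℝ} (hR : 0 < R)
    (hf : ∀ p ∈ s, DifferentiableOn ℂ (fun t : ℂ ↦ f (p + t • v)) (ball 0 R))
    (hM : ∀ p ∈ s, ∀ t ∈ ball (0 : ℂ) R, ‖f (p + t • v)‖ ≤ M) :
    TendstoUniformlyOn (fun (t : ℂ) p ↦ t⁻¹ • (f (p + t • v) - f p))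
      (fun p ↦ lineDeriv ℂ f p v) (𝓝[≠] 0) s := by
  have hlim : Tendsto (fun t : ℂ ↦ 4 * M / R ^ 2 * dist t 0) (𝓝[≠] 0) (𝓝 0) := by
    have hcont : Continuous fun t : ℂ ↦ 4 * M / R ^ 2 * dist t 0 := by fun_prop
    simpa using (hcont.tendsto 0).mono_left nhdsWithin_le_nhds
  rw [Metric.tendstoUniformlyOn_iff]
  intro ε hε
  filter_upwards [hlim.eventually_lt_const hε, self_mem_nhdsWithin,
    nhdsWithin_le_nhds (ball_mem_nhds 0 hR)] with t htε ht0 htR p hp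
  have hquot : t⁻¹ • (f (p + t • v) - f p) = dslope (fun t : ℂ ↦ f (p + t • v)) 0 t := by
    rw [dslope_of_ne _ ht0, slope_def_module, sub_zero, zero_smul, add_zero]
  rw [dist_comm, dist_eq_norm, hquot]
  exact (norm_dslope_sub_deriv_le (hf p hp) (hM p hp) htR).trans_lt htε

theorem differentiableOn_fderiv_apply {f : E → G} {U : Set E} (hU : IsOpen U)
    (hf : DifferentiableOn ℂ f U) (v : E) : DifferentiableOn ℂ (fun p ↦ fderiv ℂ f p v) U := by
  intro c hc
  let V : Set E := {q ∈ U | ‖f q‖ ≤ ‖f c‖ + 1}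
  have hcont : ContinuousAt f c := (hf.differentiableAt (hU.mem_nhds hc)).continuousAt
  have hV : V ∈ 𝓝 c := (hU.eventually_mem hc).and
    (hcont.norm.eventually_le_const (lt_add_one ‖f c‖))
  obtain ⟨ε, hε, hεV⟩ := exists_forall_ball_add_smul_mem ℂ hV v
  have hdiffAt : ∀ p ∈ ball c ε, ∀ t ∈ ball (0 : ℂ) ε, DifferentiableAt ℂ f (p + t • v) :=
    fun p hp t ht ↦ hf.differentiableAt (hU.mem_nhds (hεV p hp t ht).1)
  have hdiffAt_ball : ∀ p ∈ ball c ε, DifferentiableAt ℂ f p := fun p hp ↦ by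
    simpa using hdiffAt p hp 0 (mem_ball_self hε)
  have hlim := tendstoUniformlyOn_lineDeriv (f := f) (v := v) hε
    (fun p hp t ht ↦ ((hdiffAt p hp t ht).comp t (by fun_prop)).differentiableWithinAt)
    (fun p hp t ht ↦ (hεV p hp t ht).2)
  have hquot : ∀ᶠ t : ℂ in 𝓝[≠] 0,
      DifferentiableOn ℂ (fun p ↦ t⁻¹ • (f (p + t • v) - f p)) (ball c ε) := by
    filter_upwards [nhdsWithin_le_nhds (ball_mem_nhds 0 hε)] with t ht p hp
    have hshift := (differentiableAt_comp_add_right (t • v)).2 (hdiffAt p hp t ht)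
    exact ((hshift.sub (hdiffAt_ball p hp)).const_smul _).differentiableWithinAt
  have hline : DifferentiableOn ℂ (fun p ↦ fderiv ℂ f p v) (ball c ε) :=
    (differentiableOn_of_tendstoUniformlyOn isOpen_ball hquot hlim).congr
      fun p hp ↦ (hdiffAt_ball p hp).lineDeriv_eq_fderiv.symm
  exact (hline.differentiableAt (ball_mem_nhds c hε)).differentiableWithinAt

end Holomorphic

section Factor

variable {𝕜 E : Type*} [NontriviallyNormedField 𝕜] [NormedAddCommGroup E] [NormedSpace 𝕜 E]
  {U : Set E}

lemma exists_differentiableOn_factor {ι : Type*} {a η : ι → E → 𝕜} (hU : IsOpen U)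
    (ha : ∀ i, DifferentiableOn 𝕜 (a i) U) (hη : ∀ i, DifferentiableOn 𝕜 (η i) U)
    (ha0 : ∀ p ∈ U, ∃ i, a i p ≠ 0) (hprop : ∀ p ∈ U, ∀ i j, a i p * η j p = a j p * η i p) :
    ∃ g : E → 𝕜, DifferentiableOn 𝕜 g U ∧ ∀ p ∈ U, ∀ i, η i p = g p * a i p := by
  have hpointwise : ∀ p ∈ U, ∃ z : 𝕜, ∀ j, η j p = z * a j p := fun p hp ↦ by
    obtain ⟨i, hi⟩ := ha0 p hp
    refine ⟨η i p / a i p, fun j ↦ ?_⟩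
    rw [div_mul_eq_mul_div, eq_div_iff hi]
    linear_combination hprop p hp i j
  choose! g hg using hpointwise
  refine ⟨g, fun c hc ↦ ?_, hg⟩
  obtain ⟨i, hi⟩ := ha0 c hc
  have hac : DifferentiableAt 𝕜 (a i) c := (ha i).differentiableAt (hU.mem_nhds hc)
  have hηc : DifferentiableAt 𝕜 (η i) c := (hη i).differentiableAt (hU.mem_nhds hc)
  have hquot : g =ᶠ[𝓝 c] η i * (a i)⁻¹ := by
    filter_upwards [hU.mem_nhds hc, hac.continuousAt.eventually_ne hi] with p hp hap
    exact (eq_mul_inv_iff_mul_eq₀ hap).2 (hg p hp i).symm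
  exact ((hηc.mul (hac.inv hi)).congr_of_eventuallyEq hquot).differentiableWithinAt

theorem wedge_eq_zero_iff_exists_differentiableOn_factor {a b η₁ η₂ : E → 𝕜} (hU : IsOpen U)
    (ha : DifferentiableOn 𝕜 a U) (hb : DifferentiableOn 𝕜 b U)
    (hη₁ : DifferentiableOn 𝕜 η₁ U) (hη₂ : DifferentiableOn 𝕜 η₂ U)
    (hab : ∀ p ∈ U, (a p, b p) ≠ (0, 0)) :
    (∀ p ∈ U, a p * η₂ p - b p * η₁ p = 0) ↔
      ∃ g : E → 𝕜, DifferentiableOn 𝕜 g U ∧ ∀ p ∈ U, η₁ p = g p * a p ∧ η₂ p = g p * b p := by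
  refine ⟨fun hwedge ↦ ?_, fun ⟨g, _, hg⟩ p hp ↦ ?_⟩
  · obtain ⟨g, hgU, hg⟩ := exists_differentiableOn_factor (a := ![a, b]) (η := ![η₁, η₂]) hU
      (by simp [Fin.forall_fin_two, ha, hb]) (by simp [Fin.forall_fin_two, hη₁, hη₂])
      (fun p hp ↦ by simpa [Fin.exists_fin_two, or_iff_not_imp_left] using hab p hp)
      (fun p hp ↦ by simp [Fin.forall_fin_two, sub_eq_zero.1 (hwedge p hp)])
    exact ⟨g, hgU, fun p hp ↦ ⟨hg p hp 0, hg p hp 1⟩⟩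
  · obtain ⟨h₁, h₂⟩ := hg p hp
    rw [h₁, h₂]
    ring

end Factor

lemma differentiableOn_pdx {U : Set (ℂ × ℂ)} {f : ℂ × ℂ → ℂ} (hU : IsOpen U)
    (hf : DifferentiableOn ℂ f U) : DifferentiableOn ℂ (pdx f) U :=
  differentiableOn_fderiv_apply hU hf (1, 0)

lemma differentiableOn_pdy {U : Set (ℂ × ℂ)} {f : ℂ × ℂ → ℂ} (hU : IsOpen U)
    (hf : DifferentiableOn ℂ f U) : DifferentiableOn ℂ (pdy f) U :=
  differentiableOn_fderiv_apply hU hf (0, 1)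

/-- Lemma 1, (ii) ⟺ (iii): for F holomorphic with nonvanishing differential and a
holomorphic 1-form η = (η₁, η₂) on U, one has dF ∧ η ≡ 0 on U iff η = g·dF for some
holomorphic g on U.  In particular, dF ∧ (ω − dr) ≡ 0 iff ω = g·dF + dr for some
holomorphic g. -/
theorem wedge_vanishes_iff_proportional
    (U : Set (ℂ × ℂ)) (hU : IsOpen U)
    (F : ℂ × ℂ → ℂ) (hF : DifferentiableOn ℂ F U)
    (hdF : ∀ p ∈ U, (pdx F p, pdy F p) ≠ (0, 0))
    (η₁ η₂ : ℂ × ℂ → ℂ)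
    (hη₁ : DifferentiableOn ℂ η₁ U) (hη₂ : DifferentiableOn ℂ η₂ U) :
    ((∀ p ∈ U, pdx F p * η₂ p - pdy F p * η₁ p = 0) ↔
      (∃ g : ℂ × ℂ → ℂ, DifferentiableOn ℂ g U ∧
        ∀ p ∈ U, η₁ p = g p * pdx F p ∧ η₂ p = g p * pdy F p)) ∧
    (∀ P Q r : ℂ × ℂ → ℂ, DifferentiableOn ℂ P U → DifferentiableOn ℂ Q U →
      DifferentiableOn ℂ r U →
      ((∀ p ∈ U, pdx F p * (Q p - pdy r p) - pdy F p * (P p - pdx r p) = 0) ↔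
        (∃ g : ℂ × ℂ → ℂ, DifferentiableOn ℂ g U ∧
          ∀ p ∈ U, P p = g p * pdx F p + pdx r p ∧ Q p = g p * pdy F p + pdy r p))) := by
  have hFx := differentiableOn_pdx hU hF
  have hFy := differentiableOn_pdy hU hF
  refine ⟨wedge_eq_zero_iff_exists_differentiableOn_factor hU hFx hFy hη₁ hη₂ hdF,
    fun P Q r hP hQ hr ↦ ?_⟩
  simpa only [Pi.sub_apply, sub_eq_iff_eq_add] using
    wedge_eq_zero_iff_exists_differentiableOn_factor hU hFx hFy
      (hP.sub (differentiableOn_pdx hU hr)) (hQ.sub (differentiableOn_pdy hU hr)) hdF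
end

section
/- Let U ⊆ ℂ² be open, F : U → ℂ holomorphic, ω = (P,Q) a holomorphic 1-form on U, and let (g_i, r_i), 1 ≤ i ≤ k, be a Françoise sequence of order k for dF + εω (with g₀ = 1). Define, for (x,y,ε) ∈ U × ℂ: G(x,y,ε) = Σ_{i=0}^{k} (−1)^i ε^i g_i(x,y), A = G·(∂F/∂x + εP), B = G·(∂F/∂y + εQ), C = Σ_{i=1}^{k} (−1)^{i+1} i ε^{i−1} r_i(x,y), and F_ε(x,y) = F(x,y) + Σ_{i=1}^{k} (−1)^{i+1} ε^i r_i(x,y). Then: C = ∂F_ε/∂ε identically on U × ℂ, and, regarding A − ∂F_ε/∂x and B − ∂F_ε/∂y as polynomials in ε with holomorphic coefficients on U, the coefficient of ε^n vanishes identically for every n ≤ k (indeed A − ∂F_ε/∂x = (−1)^k ε^{k+1} g_k P and B − ∂F_ε/∂y = (−1)^k ε^{k+1} g_k Q). -/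
/-- G(x,y,ε) = Σ_{i=0}^{k} (−1)^i ε^i g_i(x,y). -/
noncomputable def Gser (k : ℕ) (g : ℕ → ℂ × ℂ → ℂ) (ε : ℂ) (q : ℂ × ℂ) : ℂ :=
  ∑ i ∈ Finset.range (k + 1), (-1 : ℂ) ^ i * ε ^ i * g i q

/-- C(x,y,ε) = Σ_{i=1}^{k} (−1)^{i+1} i ε^{i−1} r_i(x,y). -/
noncomputable def Cser (k : ℕ) (r : ℕ → ℂ × ℂ → ℂ) (ε : ℂ) (q : ℂ × ℂ) : ℂ :=
  ∑ i ∈ Finset.Icc 1 k, (-1 : ℂ) ^ (i + 1) * (i : ℂ) * ε ^ (i - 1) * r i q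

/-- F_ε(x,y) = F(x,y) + Σ_{i=1}^{k} (−1)^{i+1} ε^i r_i(x,y). -/
noncomputable def Feps (k : ℕ) (F : ℂ × ℂ → ℂ) (r : ℕ → ℂ × ℂ → ℂ) (ε : ℂ)
    (q : ℂ × ℂ) : ℂ :=
  F q + ∑ i ∈ Finset.Icc 1 k, (-1 : ℂ) ^ (i + 1) * ε ^ i * r i q

theorem alternating_sum_smul_sub_eq_remainder {R M : Type*} [CommRing R] [AddCommGroup M]
    [Module R M] {a : ℕ → R} {s : ℕ → M} {D w : M} {k : ℕ} (h0 : a 0 = 1)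
    (h : ∀ i, 1 ≤ i → i ≤ k → a (i - 1) • w = a i • D + s i) (ε : R) :
    (∑ i ∈ Finset.range (k + 1), (-1) ^ i * ε ^ i * a i) • (D + ε • w)
      - (D + ∑ i ∈ Finset.Icc 1 k, ((-1) ^ (i + 1) * ε ^ i) • s i)
      = ((-1) ^ k * ε ^ (k + 1) * a k) • w := by
  induction k with
  | zero => simp [h0]
  | succ n ih =>
    have remainder := ih fun i hi hin => h i hi (hin.trans n.le_succ)
    have relation : a n • w = a (n + 1) • D + s (n + 1) := h (n + 1) n.succ_pos le_rfl
    rw [Finset.sum_range_succ, Finset.sum_Icc_succ_top n.succ_pos]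
    linear_combination (norm := module) remainder + ((-1 : R) ^ n * ε ^ (n + 1)) • relation

theorem continuousLinearMap_prod_self_ext_iff {R M : Type*} [Semiring R] [TopologicalSpace R]
    [AddCommMonoid M] [TopologicalSpace M] [Module R M] {A B : R × R →L[R] M} :
    A = B ↔ A (1, 0) = B (1, 0) ∧ A (0, 1) = B (0, 1) := by
  refine ⟨fun h => h ▸ ⟨rfl, rfl⟩, fun ⟨hx, hy⟩ => ?_⟩
  ext
  · simpa using hx
  · simpa using hy

section NormedSpace

variable {𝕜 E V : Type*} [NontriviallyNormedField 𝕜] [NormedAddCommGroup E] [NormedSpace 𝕜 E]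
  [NormedAddCommGroup V] [NormedSpace 𝕜 V]

theorem hasDerivAt_sum_mul_pow_smul (s : Finset ℕ) (c : ℕ → 𝕜) (v : ℕ → V) (ε : 𝕜) :
    HasDerivAt (fun e => ∑ i ∈ s, (c i * e ^ i) • v i)
      (∑ i ∈ s, (c i * i * ε ^ (i - 1)) • v i) ε := by
  refine HasDerivAt.fun_sum fun i _ => ?_
  simpa only [mul_assoc] using ((hasDerivAt_pow i ε).const_mul (c i)).smul_const (v i)

theorem fderiv_add_sum_smul {ι : Type*} {s : Finset ι} {F : E → V} {r : ι → E → V} {p : E}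
    (hF : DifferentiableAt 𝕜 F p) (hr : ∀ i ∈ s, DifferentiableAt 𝕜 (r i) p) (c : ι → 𝕜) :
    fderiv 𝕜 (fun q => F q + ∑ i ∈ s, c i • r i q) p
      = fderiv 𝕜 F p + ∑ i ∈ s, c i • fderiv 𝕜 (r i) p :=
  (hF.hasFDerivAt.add
    (HasFDerivAt.fun_sum fun i hi => (hr i hi).hasFDerivAt.const_smul (c i))).fderiv

theorem francoise_gives_godbillon_vey_primitive_general {U : Set E} (hU : IsOpen U) {k : ℕ}
    {F : E → V} {ω : E → E →L[𝕜] V} {g : ℕ → E → 𝕜} {r : ℕ → E → V}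
    (hF : DifferentiableOn 𝕜 F U) (hg0 : ∀ p ∈ U, g 0 p = 1)
    (hr : ∀ i, 1 ≤ i → i ≤ k → DifferentiableOn 𝕜 (r i) U)
    (hFr : ∀ i, 1 ≤ i → i ≤ k → ∀ p ∈ U,
      g (i - 1) p • ω p = g i p • fderiv 𝕜 F p + fderiv 𝕜 (r i) p)
    (ε : 𝕜) {p : E} (hp : p ∈ U) :
    HasDerivAt (fun e : 𝕜 => F p + ∑ i ∈ Finset.Icc 1 k, ((-1) ^ (i + 1) * e ^ i) • r i p)
      (∑ i ∈ Finset.Icc 1 k, ((-1) ^ (i + 1) * i * ε ^ (i - 1)) • r i p) ε ∧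
    (∑ i ∈ Finset.range (k + 1), (-1) ^ i * ε ^ i * g i p) • (fderiv 𝕜 F p + ε • ω p)
      - fderiv 𝕜 (fun q => F q + ∑ i ∈ Finset.Icc 1 k, ((-1) ^ (i + 1) * ε ^ i) • r i q) p
      = ((-1) ^ k * ε ^ (k + 1) * g k p) • ω p := by
  have hUp : U ∈ nhds p := hU.mem_nhds hp
  have hrp : ∀ i ∈ Finset.Icc 1 k, DifferentiableAt 𝕜 (r i) p := fun i hi =>
    (hr i (Finset.mem_Icc.1 hi).1 (Finset.mem_Icc.1 hi).2).differentiableAt hUp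
  refine ⟨(hasDerivAt_sum_mul_pow_smul _ _ _ ε).const_add (F p), ?_⟩
  rw [fderiv_add_sum_smul (hF.differentiableAt hUp) hrp]
  exact alternating_sum_smul_sub_eq_remainder (a := (g · p)) (hg0 p hp)
    (fun i hi hik => hFr i hi hik p hp) ε

end NormedSpace

/-- Key computation in the proof of Theorem 7(ii): for a Françoise sequence of order k,
setting G = Σ (−1)^i ε^i g_i, A = G·(∂F/∂x + εP), B = G·(∂F/∂y + εQ),
C = Σ (−1)^{i+1} i ε^{i−1} r_i and F_ε = F + Σ (−1)^{i+1} ε^i r_i, one has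
C = ∂F_ε/∂ε, A − ∂F_ε/∂x = (−1)^k ε^{k+1} g_k P, B − ∂F_ε/∂y = (−1)^k ε^{k+1} g_k Q
(in particular the coefficients of ε^n of A − ∂F_ε/∂x, B − ∂F_ε/∂y vanish for n ≤ k). -/
theorem francoise_gives_godbillon_vey_primitive
    (U : Set (ℂ × ℂ)) (hU : IsOpen U) (k : ℕ)
    (F P Q : ℂ × ℂ → ℂ) (g r : ℕ → ℂ × ℂ → ℂ)
    (hF : DifferentiableOn ℂ F U)
    (hP : DifferentiableOn ℂ P U) (hQ : DifferentiableOn ℂ Q U)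
    (hg0 : ∀ p, g 0 p = 1)
    (hgd : ∀ i ≤ k, DifferentiableOn ℂ (g i) U)
    (hrd : ∀ i, 1 ≤ i → i ≤ k → DifferentiableOn ℂ (r i) U)
    (hFr : ∀ i, 1 ≤ i → i ≤ k → ∀ p ∈ U,
      g (i - 1) p * P p = g i p * pdx F p + pdx (r i) p ∧
      g (i - 1) p * Q p = g i p * pdy F p + pdy (r i) p) :
    ∀ ε : ℂ, ∀ p ∈ U,
      HasDerivAt (fun e : ℂ => Feps k F r e p) (Cser k r ε p) ε ∧
      Gser k g ε p * (pdx F p + ε * P p) - pdx (Feps k F r ε) p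
        = (-1 : ℂ) ^ k * ε ^ (k + 1) * g k p * P p ∧
      Gser k g ε p * (pdy F p + ε * Q p) - pdy (Feps k F r ε) p
        = (-1 : ℂ) ^ k * ε ^ (k + 1) * g k p * Q p := by
  intro ε p hp
  obtain ⟨hε, hd⟩ := francoise_gives_godbillon_vey_primitive_general hU
    (ω := fun q => P q • .fst ℂ ℂ ℂ + Q q • .snd ℂ ℂ ℂ) hF (fun q _ => hg0 q) hrd
    (fun i hi hik q hq => continuousLinearMap_prod_self_ext_iff.2 <| by
      simpa [pdx, pdy] using hFr i hi hik q hq) ε hp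
  exact ⟨hε, by
    simpa [Gser, Feps.eq_unfold, pdx, pdy, mul_add]
      using continuousLinearMap_prod_self_ext_iff.1 hd⟩
end

section
/- Let U ⊆ ℂ² be open, F : U → ℂ holomorphic, ω = (P,Q) a holomorphic 1-form on U, and let ℓ ≥ 0. Let (g_i, r_i), 1 ≤ i ≤ ℓ+1, be a Françoise sequence of order ℓ+1 for dF + εω with g_{ℓ+1} = 0. For ε ∈ ℂ define G_ε = Σ_{i=0}^{ℓ} (−1)^i ε^i g_i and F_ε = F + Σ_{i=1}^{ℓ+1} (−1)^{i+1} ε^i r_i. Then for every ε ∈ ℂ the exact identities ∂F_ε/∂x = G_ε·(∂F/∂x + εP) and ∂F_ε/∂y = G_ε·(∂F/∂y + εQ) hold on U; that is, F_ε is a first integral of the foliation dF + εω = 0 with integrating factor G_ε. -/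
/-!
At a point of `U`, the relations `gᵢ ω = gᵢ₊₁ dF + drᵢ₊₁` make the `ε`-expansion of `dF_ε`
telescope: truncating at order `n` gives `dF_ε = G_ε (dF + ε ω) + (-ε)ⁿ gₙ dF`. The remainder
vanishes as soon as `gₙ = 0`.
-/

theorem add_sum_smul_eq_of_smul_eq_smul_add {R M : Type*} [CommRing R] [AddCommGroup M] [Module R M]
    {n : ℕ} {g : ℕ → R} {η ω : M} {ρ : ℕ → M} (hg : g 0 = 1)
    (h : ∀ i < n, g i • ω = g (i + 1) • η + ρ (i + 1)) (ε : R) :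
    η + ∑ i ∈ Finset.Icc 1 n, ((-1) ^ (i + 1) * ε ^ i) • ρ i =
      (∑ i ∈ Finset.range n, (-1) ^ i * ε ^ i * g i) • (η + ε • ω) +
        ((-1) ^ n * ε ^ n * g n) • η := by
  induction n with
  | zero => simp [hg]
  | succ n ih =>
    have hρ : ρ (n + 1) = g n • ω - g (n + 1) • η := eq_sub_of_add_eq' (h n n.lt_succ_self).symm
    rw [Finset.sum_Icc_succ_top (Nat.le_add_left 1 n), Finset.sum_range_succ, ← add_assoc,
      ih fun i hi => h i (hi.trans n.lt_succ_self), hρ]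
    module

section FirstIntegral

variable {𝕜 E W : Type*} [NontriviallyNormedField 𝕜] [NormedAddCommGroup E] [NormedSpace 𝕜 E]
  [NormedAddCommGroup W] [NormedSpace 𝕜 W]

/-- `(gᵢ, rᵢ)`, `1 ≤ i ≤ n`, is a Françoise sequence on `U` for the deformation `dF + ε ω`, where
`F` and the one-form `ω` may take values in a normed space `W`. The convention `g₀ = 1` is a field,
and the relation of index `i + 1` is stored at index `i`. -/
structure IsFrancoiseSequence (F : E → W) (ω : E → E →L[𝕜] W) (g : ℕ → E → 𝕜) (r : ℕ → E → W)
    (U : Set E) (n : ℕ) : Prop where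
  g_zero : ∀ p ∈ U, g 0 p = 1
  differentiableOn : ∀ i ∈ Finset.Icc 1 n, DifferentiableOn 𝕜 (r i) U
  smul_eq : ∀ i < n, ∀ p ∈ U,
    g i p • ω p = g (i + 1) p • fderiv 𝕜 F p + fderiv 𝕜 (r (i + 1)) p

/-- The function `F_ε = F + ∑_{i=1}^n (-1)^{i+1} εⁱ rᵢ`, the candidate first integral of
`dF + ε ω = 0`. -/
def deformedIntegral (F : E → W) (r : ℕ → E → W) (n : ℕ) (ε : 𝕜) (p : E) : W :=
  F p + ∑ i ∈ Finset.Icc 1 n, ((-1) ^ (i + 1) * ε ^ i) • r i p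

/-- The function `G_ε = ∑_{i<n} (-1)ⁱ εⁱ gᵢ`, the candidate integrating factor of `dF + ε ω`.
A Françoise sequence of length `ℓ` corresponds to `n = ℓ + 1`. -/
def integratingFactor (g : ℕ → E → 𝕜) (n : ℕ) (ε : 𝕜) (p : E) : 𝕜 :=
  ∑ i ∈ Finset.range n, (-1) ^ i * ε ^ i * g i p

theorem fderiv_deformedIntegral {F : E → W} {r : ℕ → E → W} {n : ℕ} {p : E}
    (hF : DifferentiableAt 𝕜 F p) (hr : ∀ i ∈ Finset.Icc 1 n, DifferentiableAt 𝕜 (r i) p) (ε : 𝕜) :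
    fderiv 𝕜 (deformedIntegral F r n ε) p =
      fderiv 𝕜 F p + ∑ i ∈ Finset.Icc 1 n, ((-1) ^ (i + 1) * ε ^ i) • fderiv 𝕜 (r i) p :=
  (hF.hasFDerivAt.fun_add
    (HasFDerivAt.fun_sum fun i hi => (hr i hi).hasFDerivAt.fun_const_smul _)).fderiv

theorem IsFrancoiseSequence.fderiv_deformedIntegral_eq_add_remainder {F : E → W}
    {ω : E → E →L[𝕜] W} {g : ℕ → E → 𝕜} {r : ℕ → E → W} {U : Set E} {n : ℕ}
    (h : IsFrancoiseSequence F ω g r U n) (hU : IsOpen U) (hF : DifferentiableOn 𝕜 F U) (ε : 𝕜)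
    {p : E} (hp : p ∈ U) :
    fderiv 𝕜 (deformedIntegral F r n ε) p =
      integratingFactor g n ε p • (fderiv 𝕜 F p + ε • ω p) +
        ((-1) ^ n * ε ^ n * g n p) • fderiv 𝕜 F p := by
  have hUp : U ∈ nhds p := hU.mem_nhds hp
  rw [fderiv_deformedIntegral (hF.differentiableAt hUp)
    fun i hi => (h.differentiableOn i hi).differentiableAt hUp]
  exact add_sum_smul_eq_of_smul_eq_smul_add (h.g_zero p hp) (fun i hi => h.smul_eq i hi p hp) ε

theorem finite_francoise_gives_first_integral_general {F : E → W} {ω : E → E →L[𝕜] W}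
    {g : ℕ → E → 𝕜} {r : ℕ → E → W} {U : Set E} {n : ℕ} (h : IsFrancoiseSequence F ω g r U n)
    (hU : IsOpen U) (hF : DifferentiableOn 𝕜 F U) (hg : ∀ p ∈ U, g n p = 0) (ε : 𝕜)
    {p : E} (hp : p ∈ U) :
    fderiv 𝕜 (deformedIntegral F r n ε) p =
      integratingFactor g n ε p • (fderiv 𝕜 F p + ε • ω p) := by
  rw [h.fderiv_deformedIntegral_eq_add_remainder hU hF ε hp, hg p hp, mul_zero, zero_smul, add_zero]

end FirstIntegral

section Plane

/-- The one-form `P dx + Q dy` on `ℂ²`. -/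
noncomputable def planarOneForm (P Q : ℂ × ℂ → ℂ) (p : ℂ × ℂ) : ℂ × ℂ →L[ℂ] ℂ :=
  P p • ContinuousLinearMap.fst ℂ ℂ ℂ + Q p • ContinuousLinearMap.snd ℂ ℂ ℂ

theorem planarOneForm_apply (P Q : ℂ × ℂ → ℂ) (p v : ℂ × ℂ) :
    planarOneForm P Q p v = P p * v.1 + Q p * v.2 :=
  rfl

theorem isFrancoiseSequence_planarOneForm {F P Q : ℂ × ℂ → ℂ} {g r : ℕ → ℂ × ℂ → ℂ}
    {U : Set (ℂ × ℂ)} {n : ℕ} (hg : ∀ p ∈ U, g 0 p = 1)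
    (hr : ∀ i, 1 ≤ i → i ≤ n → DifferentiableOn ℂ (r i) U)
    (h : ∀ i, 1 ≤ i → i ≤ n → ∀ p ∈ U,
      g (i - 1) p * P p = g i p * pdx F p + pdx (r i) p ∧
      g (i - 1) p * Q p = g i p * pdy F p + pdy (r i) p) :
    IsFrancoiseSequence F (planarOneForm P Q) g r U n where
  g_zero := hg
  differentiableOn i hi := hr i (Finset.mem_Icc.1 hi).1 (Finset.mem_Icc.1 hi).2
  smul_eq i hi p hp := by
    obtain ⟨hx, hy⟩ := h (i + 1) (Nat.le_add_left 1 i) hi p hp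
    ext
    · simpa [planarOneForm_apply, pdx] using hx
    · simpa [planarOneForm_apply, pdy] using hy

theorem pdx_and_pdy_eq_of_fderiv_eq_smul {F H P Q : ℂ × ℂ → ℂ} {p : ℂ × ℂ} {c ε : ℂ}
    (h : fderiv ℂ H p = c • (fderiv ℂ F p + ε • planarOneForm P Q p)) :
    pdx H p = c * (pdx F p + ε * P p) ∧ pdy H p = c * (pdy F p + ε * Q p) := by
  simp [pdx, pdy, h, planarOneForm_apply, mul_add]

end Plane

/-- Core of Theorem 8: if (g_i, r_i), 1 ≤ i ≤ ℓ+1, is a Françoise sequence for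
dF + εω with g_{ℓ+1} = 0 (length ℓ), then for every ε the function
F_ε = F + Σ_{i=1}^{ℓ+1} (−1)^{i+1} ε^i r_i is a first integral of dF + εω = 0 with
integrating factor G_ε = Σ_{i=0}^{ℓ} (−1)^i ε^i g_i, i.e. dF_ε = G_ε·(dF + εω). -/
theorem finite_francoise_gives_first_integral
    (U : Set (ℂ × ℂ)) (hU : IsOpen U) (ℓ : ℕ)
    (F P Q : ℂ × ℂ → ℂ) (g r : ℕ → ℂ × ℂ → ℂ)
    (hF : DifferentiableOn ℂ F U)
    (hP : DifferentiableOn ℂ P U) (hQ : DifferentiableOn ℂ Q U)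
    (hg0 : ∀ p, g 0 p = 1)
    (hgd : ∀ i ≤ ℓ + 1, DifferentiableOn ℂ (g i) U)
    (hrd : ∀ i, 1 ≤ i → i ≤ ℓ + 1 → DifferentiableOn ℂ (r i) U)
    (hFr : ∀ i, 1 ≤ i → i ≤ ℓ + 1 → ∀ p ∈ U,
      g (i - 1) p * P p = g i p * pdx F p + pdx (r i) p ∧
      g (i - 1) p * Q p = g i p * pdy F p + pdy (r i) p)
    (hlen : ∀ p ∈ U, g (ℓ + 1) p = 0) :
    ∀ ε : ℂ, ∀ p ∈ U,
      pdx (fun q => F q + ∑ i ∈ Finset.Icc 1 (ℓ + 1), (-1 : ℂ) ^ (i + 1) * ε ^ i * r i q) p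
        = (∑ i ∈ Finset.range (ℓ + 1), (-1 : ℂ) ^ i * ε ^ i * g i p) *
            (pdx F p + ε * P p) ∧
      pdy (fun q => F q + ∑ i ∈ Finset.Icc 1 (ℓ + 1), (-1 : ℂ) ^ (i + 1) * ε ^ i * r i q) p
        = (∑ i ∈ Finset.range (ℓ + 1), (-1 : ℂ) ^ i * ε ^ i * g i p) *
            (pdy F p + ε * Q p) := by
  intro ε p hp
  exact pdx_and_pdy_eq_of_fderiv_eq_smul (finite_francoise_gives_first_integral_general
    (isFrancoiseSequence_planarOneForm (fun p _ => hg0 p) hrd hFr) hU hF hlen ε hp)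
end

section
/- Let U ⊆ ℂ² be open, let F : U → ℂ and L : U → ℂ be holomorphic, and let r : U → ℂ be holomorphic and nonvanishing with ∂L/∂x = (∂r/∂x)/r and ∂L/∂y = (∂r/∂y)/r on U (L is a branch of log r). Let ω = (F·(∂r/∂x)/r, F·(∂r/∂y)/r) (i.e. ω = F·dr/r). Define, for i ≥ 0, g_i = (−1)^i L^i / i!, and for i ≥ 1, r_i = −F·g_i = (−1)^{i+1} F·L^i / i!. Then for every i ≥ 1 the relation g_{i−1}·ω = g_i·dF + dr_i holds on U, i.e. g_{i−1}·F·(∂r/∂x)/r = g_i·∂F/∂x + ∂r_i/∂x and g_{i−1}·F·(∂r/∂y)/r = g_i·∂F/∂y + ∂r_i/∂y; so (g_i, r_i) is a Françoise sequence for dF + εω of every order. -/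
/-- g_i = (−1)^i L^i / i!. -/
noncomputable def gdar (L : ℂ × ℂ → ℂ) (i : ℕ) (q : ℂ × ℂ) : ℂ :=
  (-1 : ℂ) ^ i * L q ^ i / (Nat.factorial i : ℂ)

/-- r_i = −F·g_i = (−1)^{i+1} F·L^i / i!. -/
noncomputable def rdar (F L : ℂ × ℂ → ℂ) (i : ℕ) (q : ℂ × ℂ) : ℂ :=
  -(F q) * gdar L i q

section NormedSpace

variable {𝕜 E : Type*} [NontriviallyNormedField 𝕜] [NormedAddCommGroup E] [NormedSpace 𝕜 E]

/-- `(g, r)` is a Françoise sequence on `U` for the deformation `dF + εω`. The relation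
`g_{i-1} ω = g_i dF + dr_i`, `i ≥ 1`, is indexed from `0` to avoid truncated subtraction, and `r 0`
is unconstrained. -/
structure IsFrancoiseSequence_s13 (U : Set E) (F : E → 𝕜) (ω : E → E →L[𝕜] 𝕜) (g r : ℕ → E → 𝕜) :
    Prop where
  eq_one : ∀ p ∈ U, g 0 p = 1
  differentiableOn_coeff : ∀ i, DifferentiableOn 𝕜 (g i) U
  differentiableOn_remainder : ∀ i, DifferentiableOn 𝕜 (r (i + 1)) U
  smul_eq : ∀ i, ∀ p ∈ U,
    g i p • ω p = g (i + 1) p • fderiv 𝕜 F p + fderiv 𝕜 (r (i + 1)) p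

/-- The coefficient `g_i = (-L)^i / i!` of the Françoise sequence for `dF + ε F dL`. The sign is
kept inside the power so that these are the divided powers of `-L`. -/
def darbouxCoeff (L : E → 𝕜) (i : ℕ) (q : E) : 𝕜 :=
  (-L q) ^ i / (i.factorial : 𝕜)

variable {U : Set E} {F L : E → 𝕜} {F' L' : E →L[𝕜] 𝕜} {p : E}

theorem differentiableOn_darbouxCoeff (hL : DifferentiableOn 𝕜 L U) (i : ℕ) :
    DifferentiableOn 𝕜 (darbouxCoeff L i) U :=
  ((hL.neg.pow i).mul_const (i.factorial : 𝕜)⁻¹).congr fun _ _ ↦ div_eq_mul_inv _ _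

variable [CharZero 𝕜]

theorem hasDerivAt_pow_succ_div_factorial (n : ℕ) (z : 𝕜) :
    HasDerivAt (fun w : 𝕜 ↦ w ^ (n + 1) / ((n + 1).factorial : 𝕜))
      (z ^ n / (n.factorial : 𝕜)) z := by
  have hn : (n : 𝕜) + 1 ≠ 0 := n.cast_add_one_ne_zero
  refine ((hasDerivAt_pow (n + 1) z).div_const _).congr_deriv ?_
  rw [Nat.factorial_succ, Nat.add_sub_cancel]
  push_cast
  exact mul_div_mul_left _ _ hn

theorem hasFDerivAt_darbouxCoeff_succ (hL : HasFDerivAt L L' p) (n : ℕ) :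
    HasFDerivAt (darbouxCoeff L (n + 1)) (-(darbouxCoeff L n p • L')) p := by
  have hcomp := (hasDerivAt_pow_succ_div_factorial n (-L p)).comp_hasFDerivAt p hL.neg
  exact hcomp.congr_fderiv (smul_neg _ _)

theorem hasFDerivAt_neg_mul_darbouxCoeff_succ (hF : HasFDerivAt F F' p) (hL : HasFDerivAt L L' p)
    (n : ℕ) :
    HasFDerivAt (-F * darbouxCoeff L (n + 1))
      (darbouxCoeff L n p • F p • L' - darbouxCoeff L (n + 1) p • F') p := by
  refine (hF.neg.mul (hasFDerivAt_darbouxCoeff_succ hL n)).congr_fderiv ?_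
  rw [Pi.neg_apply, neg_smul_neg, smul_neg, smul_comm (F p), sub_eq_add_neg]

theorem example_three_francoise_sequence_general (hU : IsOpen U)
    (hF : DifferentiableOn 𝕜 F U) (hL : DifferentiableOn 𝕜 L U) :
    IsFrancoiseSequence_s13 U F (fun p ↦ F p • fderiv 𝕜 L p)
      (darbouxCoeff L) (fun i ↦ -F * darbouxCoeff L i) where
  eq_one p _ := by simp [darbouxCoeff]
  differentiableOn_coeff := differentiableOn_darbouxCoeff hL
  differentiableOn_remainder i := hF.neg.mul (differentiableOn_darbouxCoeff hL (i + 1))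
  smul_eq i p hp := by
    have hFp := (hF.differentiableAt (hU.mem_nhds hp)).hasFDerivAt
    have hLp := (hL.differentiableAt (hU.mem_nhds hp)).hasFDerivAt
    rw [(hasFDerivAt_neg_mul_darbouxCoeff_succ hFp hLp i).fderiv, add_sub_cancel]

end NormedSpace

theorem gdar_eq_darbouxCoeff (L : ℂ × ℂ → ℂ) (i : ℕ) : gdar L i = darbouxCoeff L i := by
  funext q
  rw [gdar, darbouxCoeff, neg_pow (L q)]

theorem rdar_eq_neg_mul_darbouxCoeff (F L : ℂ × ℂ → ℂ) (i : ℕ) :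
    rdar F L i = -F * darbouxCoeff L i := by
  rw [← gdar_eq_darbouxCoeff]
  rfl

/-- Example 3 of the paper: for the Darboux-integrable perturbation ω = F·dr/r (with L
a holomorphic branch of log r, i.e. dL = dr/r), the pairs g_i = (−1)^i L^i/i!,
r_i = −F·g_i form a Françoise sequence of every order: g_{i−1}·ω = g_i·dF + dr_i
for all i ≥ 1 on U. -/
theorem example_three_francoise_sequence
    (U : Set (ℂ × ℂ)) (hU : IsOpen U)
    (F L r : ℂ × ℂ → ℂ)
    (hF : DifferentiableOn ℂ F U) (hL : DifferentiableOn ℂ L U)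
    (hr : DifferentiableOn ℂ r U)
    (hr0 : ∀ p ∈ U, r p ≠ 0)
    (hLx : ∀ p ∈ U, pdx L p = pdx r p / r p)
    (hLy : ∀ p ∈ U, pdy L p = pdy r p / r p) :
    ∀ i : ℕ, 1 ≤ i → ∀ p ∈ U,
      gdar L (i - 1) p * (F p * (pdx r p / r p))
        = gdar L i p * pdx F p + pdx (rdar F L i) p ∧
      gdar L (i - 1) p * (F p * (pdy r p / r p))
        = gdar L i p * pdy F p + pdy (rdar F L i) p := by
  intro i hi p hp
  obtain ⟨n, rfl⟩ := Nat.exists_eq_add_of_le' hi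
  have h := (example_three_francoise_sequence_general hU hF hL).smul_eq n p hp
  rw [← hLx p hp, ← hLy p hp, Nat.add_sub_cancel, gdar_eq_darbouxCoeff, gdar_eq_darbouxCoeff,
    rdar_eq_neg_mul_darbouxCoeff]
  exact ⟨DFunLike.congr_fun h (1, 0), DFunLike.congr_fun h (0, 1)⟩
end
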